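/- Let F satisfy (L1) (with W ≡ 0) or (L2). Then for every T > 0 there exists a constant C_T > 0 such that for all t ∈ [τ, τ+T] and all q ∈ ℝ: in the case of (L1), ‖ψ^t(q, v₀)‖_𝔼 ≤ C_T · |v₀|_ℍ for all v₀ ∈ 𝔼; in the case of (L2), ‖ψ^t(q, v₁) − ψ^t(q, v₂)‖_𝔼 ≤ C_T · |v₁ − v₂|_ℍ for all v₁, v₂ ∈ 𝔼. -/

import Mathlib

open MeasureTheory Filter Topology Matrix

noncomputable section

namespace DelaySmoothing

variable {n : ℕ}

/-- The history segment `x_t ∈ C([-τ, 0]; ℝⁿ)` of a continuous `x : ℝ → ℝⁿ`. -/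
def seg (τ : ℝ) (x : ℝ → (Fin n → ℝ)) (hx : Continuous x) (t : ℝ) :
    C(Set.Icc (-τ) (0:ℝ), Fin n → ℝ) :=
  ⟨fun θ => x (t + θ), hx.comp (continuous_const.add continuous_subtype_val)⟩

/-- The measure of `L²(-τ, 0; ℝⁿ)`. -/
def μτ (τ : ℝ) : Measure ℝ := volume.restrict (Set.Ioo (-τ) 0)

/-- The delay phase Hilbert space `ℍ = ℝⁿ × L²(-τ, 0; ℝⁿ)`. -/
abbrev HSp (τ : ℝ) (n : ℕ) := (Fin n → ℝ) × Lp (Fin n → ℝ) 2 (μτ τ)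

/-- The space `𝔼 = C([-τ, 0]; ℝⁿ)`. -/
abbrev EE (τ : ℝ) (n : ℕ) := C(Set.Icc (-τ) (0:ℝ), Fin n → ℝ)

/-!
Integrating `ẋ(t) = Ã x_t + B̃ F(t, C x_t)` over `[q, t]` produces `∫ |C x_s| ds`. The integrand
is not controlled by `|x(s)|`, since `C` acts on the whole history, but its integral is at most a
constant times `∫ |x(u)| du` over `[q - τ, t]`: for a functional `l` and `|g| ≤ 1`, the integral
of `g(s) l(x_s)` is `l` applied to the `C([-τ, 0])`-valued integral of `g(s) x_s`, and the value
of the latter at each `θ` is bounded by an integral of `|x|`. Splitting `∫ |x(u)| du` at `q`, the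
initial history enters only through `|x(q)|` and its `L¹` norm, hence through the norm of `ℍ`, and
Grönwall's inequality bounds `x` on `[q, ∞)`. For `t ≥ τ` the whole segment at time `t + q` lies
there. Under (L2) the same argument applies to the difference of two solutions.
-/

section History

variable {E V : Type*} [NormedAddCommGroup E] {τ q t : ℝ}

/-- The phase space `C([-τ, 0]; E)` of a delay equation in `E`; `EE τ n` is the case
`E = ℝⁿ`. -/
abbrev HistorySpace (τ : ℝ) (E : Type*) [TopologicalSpace E] := C(Set.Icc (-τ) (0 : ℝ), E)

/-- The history segment `θ ↦ y (t + θ)` of a bundled continuous map `y`; `seg` is the case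
`E = ℝⁿ`, definitionally. -/
def history (τ : ℝ) (y : C(ℝ, E)) (t : ℝ) : HistorySpace τ E :=
  ⟨fun θ => y (t + θ), by fun_prop⟩

@[simp]
lemma history_apply (y : C(ℝ, E)) (t : ℝ) (θ : Set.Icc (-τ) (0 : ℝ)) :
    history τ y t θ = y (t + θ) :=
  rfl

lemma history_sub (y z : C(ℝ, E)) (t : ℝ) :
    history τ (y - z) t = history τ y t - history τ z t :=
  rfl

@[fun_prop]
lemma continuous_history (y : C(ℝ, E)) : Continuous (history τ y) :=
  ContinuousMap.continuous_of_continuous_uncurry _ <|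
    show Continuous fun p : ℝ × Set.Icc (-τ) (0 : ℝ) => y (p.1 + p.2) by fun_prop

variable [NormedSpace ℝ E] [NormedAddCommGroup V] [NormedSpace ℝ V]

lemma intervalIntegrable_smul_history (y : C(ℝ, E)) {g : ℝ → ℝ} (hg : Measurable g)
    (hg_le : ∀ s, ‖g s‖ ≤ 1) (q t : ℝ) :
    IntervalIntegrable (fun s => g s • history τ y s) volume q t := by
  have hy : IntervalIntegrable (history τ y) volume q t :=
    (continuous_history y).intervalIntegrable q t
  rw [intervalIntegrable_iff] at hy ⊢
  exact hy.bdd_smul 1 hg.aestronglyMeasurable (Eventually.of_forall hg_le)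

lemma norm_integral_smul_history_le [CompleteSpace E] (y : C(ℝ, E)) {g : ℝ → ℝ}
    (hg : Measurable g) (hg_le : ∀ s, ‖g s‖ ≤ 1) (hτ : 0 ≤ τ) (hqt : q ≤ t) :
    ‖∫ s in q..t, g s • history τ y s‖ ≤ ∫ u in (q - τ)..t, ‖y u‖ := by
  have hint := intervalIntegrable_smul_history (τ := τ) y hg hg_le q t
  rw [ContinuousMap.norm_le _ (intervalIntegral.integral_nonneg (by linarith) fun _ _ =>
    norm_nonneg _)]
  rintro ⟨θ, hθ⟩
  calc ‖(∫ s in q..t, g s • history τ y s) ⟨θ, hθ⟩‖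
      = ‖∫ s in q..t, g s • y (s + θ)‖ := by
        simp only [intervalIntegral.integral_of_le hqt, ContinuousMap.integral_apply hint.1,
          ContinuousMap.smul_apply, history_apply]
    _ ≤ ∫ s in q..t, ‖y (s + θ)‖ := by
        refine intervalIntegral.norm_integral_le_of_norm_le hqt (Eventually.of_forall
          fun s _ => ?_) (Continuous.intervalIntegrable (by fun_prop) _ _)
        rw [norm_smul]
        exact mul_le_of_le_one_left (norm_nonneg _) (hg_le s)
    _ = ∫ u in (q + θ)..(t + θ), ‖y u‖ :=
        intervalIntegral.integral_comp_add_right (fun u => ‖y u‖) θ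
    _ ≤ ∫ u in (q - τ)..t, ‖y u‖ :=
        intervalIntegral.integral_mono_interval (by linarith [hθ.1]) (by linarith)
          (by linarith [hθ.2]) (Eventually.of_forall fun u => norm_nonneg _)
          (Continuous.intervalIntegrable (by fun_prop) _ _)

lemma norm_integral_clm_history_le [CompleteSpace E] [CompleteSpace V]
    (A : HistorySpace τ E →L[ℝ] V) (y : C(ℝ, E)) (hτ : 0 ≤ τ) (hqt : q ≤ t) :
    ‖∫ s in q..t, A (history τ y s)‖ ≤ ‖A‖ * ∫ u in (q - τ)..t, ‖y u‖ := by
  have hy : ‖∫ s in q..t, history τ y s‖ ≤ ∫ u in (q - τ)..t, ‖y u‖ := by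
    simpa only [one_smul] using
      norm_integral_smul_history_le y (g := fun _ => 1) measurable_const (by simp) hτ hqt
  rw [A.intervalIntegral_comp_comm ((continuous_history y).intervalIntegrable q t)]
  exact (A.le_opNorm _).trans (by gcongr)

/- The absolute value goes inside because `|l (y_s)| = l (g s • y_s)` for the sign `g` of
`s ↦ l (y_s)`, which is only measurable. -/
lemma integral_abs_functional_history_le [CompleteSpace E] (l : HistorySpace τ E →L[ℝ] ℝ)
    (y : C(ℝ, E)) (hτ : 0 ≤ τ) (hqt : q ≤ t) :
    ∫ s in q..t, |l (history τ y s)| ≤ ‖l‖ * ∫ u in (q - τ)..t, ‖y u‖ := by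
  let g : ℝ → ℝ := fun s => if 0 ≤ l (history τ y s) then 1 else -1
  have hg : Measurable g :=
    Measurable.ite (measurableSet_le measurable_const
      (l.continuous.comp (continuous_history y)).measurable) measurable_const measurable_const
  have hg_le : ∀ s, ‖g s‖ ≤ 1 := fun s => by
    dsimp only [g]
    split_ifs <;> simp
  have habs : ∀ s, |l (history τ y s)| = l (g s • history τ y s) := fun s => by
    dsimp only [g]
    split_ifs with h
    · rw [one_smul, abs_of_nonneg h]
    · rw [neg_one_smul, map_neg, abs_of_neg (not_le.1 h)]
  calc ∫ s in q..t, |l (history τ y s)|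
      = l (∫ s in q..t, g s • history τ y s) := by
        simp only [habs]
        exact l.intervalIntegral_comp_comm (intervalIntegrable_smul_history y hg hg_le q t)
    _ ≤ ‖l‖ * ‖∫ s in q..t, g s • history τ y s‖ :=
        (Real.le_norm_self _).trans (l.le_opNorm _)
    _ ≤ ‖l‖ * ∫ u in (q - τ)..t, ‖y u‖ := by
        gcongr
        exact norm_integral_smul_history_le y hg hg_le hτ hqt

section FiniteDimensional

variable [FiniteDimensional ℝ V]

/-- The `i`-th coordinate functional of an operator `L` with finite-dimensional codomain, in the
basis `Module.finBasis ℝ V`. -/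
def coordFunctional (L : HistorySpace τ E →L[ℝ] V) (i : Fin (Module.finrank ℝ V)) :
    HistorySpace τ E →L[ℝ] ℝ :=
  ((Module.finBasis ℝ V).coord i).toContinuousLinearMap ∘L L

/-- The sum of the operator norms of the coordinates of `L`, weighted by the norms of the basis
vectors. It takes the place of `‖L‖` when a norm has to be moved inside an integral. -/
def coordNorm (L : HistorySpace τ E →L[ℝ] V) : ℝ :=
  ∑ i, ‖coordFunctional L i‖ * ‖Module.finBasis ℝ V i‖

lemma coordNorm_nonneg (L : HistorySpace τ E →L[ℝ] V) : 0 ≤ coordNorm L :=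
  Finset.sum_nonneg fun _ _ => by positivity

lemma norm_apply_le_sum_coordFunctional (L : HistorySpace τ E →L[ℝ] V)
    (φ : HistorySpace τ E) :
    ‖L φ‖ ≤ ∑ i, |coordFunctional L i φ| * ‖Module.finBasis ℝ V i‖ :=
  calc ‖L φ‖ = ‖∑ i, coordFunctional L i φ • Module.finBasis ℝ V i‖ :=
        congrArg norm ((Module.finBasis ℝ V).sum_repr (L φ)).symm
    _ ≤ ∑ i, |coordFunctional L i φ| * ‖Module.finBasis ℝ V i‖ :=
        norm_sum_le_of_le _ fun _ _ => (norm_smul _ _).le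

lemma integral_norm_clm_history_le [CompleteSpace E] (L : HistorySpace τ E →L[ℝ] V)
    (y : C(ℝ, E)) (hτ : 0 ≤ τ) (hqt : q ≤ t) :
    ∫ s in q..t, ‖L (history τ y s)‖ ≤ coordNorm L * ∫ u in (q - τ)..t, ‖y u‖ := by
  let b := Module.finBasis ℝ V
  calc ∫ s in q..t, ‖L (history τ y s)‖
      ≤ ∫ s in q..t, ∑ i, |coordFunctional L i (history τ y s)| * ‖b i‖ :=
        intervalIntegral.integral_mono_on hqt (Continuous.intervalIntegrable (by fun_prop) _ _)
          (Continuous.intervalIntegrable (by fun_prop) _ _)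
          fun s _ => norm_apply_le_sum_coordFunctional L _
    _ = ∑ i, (∫ s in q..t, |coordFunctional L i (history τ y s)|) * ‖b i‖ := by
        rw [intervalIntegral.integral_finsetSum
          fun i _ => Continuous.intervalIntegrable (by fun_prop) _ _]
        simp only [intervalIntegral.integral_mul_const]
    _ ≤ ∑ i, (‖coordFunctional L i‖ * ∫ u in (q - τ)..t, ‖y u‖) * ‖b i‖ :=
        Finset.sum_le_sum fun i _ => mul_le_mul_of_nonneg_right
          (integral_abs_functional_history_le _ y hτ hqt) (norm_nonneg (b i))
    _ = coordNorm L * ∫ u in (q - τ)..t, ‖y u‖ := by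
        rw [coordNorm, Finset.sum_mul]
        exact Finset.sum_congr rfl fun i _ => mul_right_comm _ _ _

end FiniteDimensional

end History

lemma le_mul_exp_of_le_add_mul_integral {f : ℝ → ℝ} {a M q t : ℝ} (hf : Continuous f)
    (hM : 0 ≤ M) (hle : ∀ s, q ≤ s → f s ≤ a + M * ∫ u in q..s, f u) (hqt : q ≤ t) :
    f t ≤ a * Real.exp (M * (t - q)) := by
  let G : ℝ → ℝ := fun s => a + M * ∫ u in q..s, f u
  have hG : ∀ s, HasDerivAt G (M * f s) s := fun s =>
    ((hf.integral_hasStrictDerivAt q s).hasDerivAt.const_mul M).const_add a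
  have hGq : G q ≤ a := by simp [G]
  have hG_le : G t ≤ gronwallBound a M 0 (t - q) :=
    le_gronwallBound_of_liminf_deriv_right_le
      (fun s _ => (hG s).continuousAt.continuousWithinAt)
      (fun s _ _ hr => (hG s).hasDerivWithinAt.liminf_right_slope_le hr) hGq
      (fun s hs => by
        rw [add_zero]
        exact mul_le_mul_of_nonneg_left (hle s hs.1) hM)
      t (Set.right_mem_Icc.2 hqt)
  rw [gronwallBound_ε0] at hG_le
  exact (hle t hqt).trans hG_le

section SectorSolution

variable {E V : Type*} [NormedAddCommGroup E] [NormedSpace ℝ E]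
  [NormedAddCommGroup V] [NormedSpace ℝ V] {τ K q t : ℝ}
  {A : HistorySpace τ E →L[ℝ] E} {Cop : HistorySpace τ E →L[ℝ] V} {y : C(ℝ, E)}

/-- `y` solves `ẏ(t) = A y_t + g(t)` on `[q, ∞)` for some `g` with `‖g(t)‖ ≤ K ‖C y_t‖`. Solutions
of the delay equation under (L1) and differences of two solutions under (L2) are of this kind,
so both are estimated at once. -/
def IsSectorSolution (A : HistorySpace τ E →L[ℝ] E) (Cop : HistorySpace τ E →L[ℝ] V)
    (K q : ℝ) (y : C(ℝ, E)) : Prop :=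
  ∀ t, q ≤ t → ∃ g : E, ‖g‖ ≤ K * ‖Cop (history τ y t)‖ ∧
    HasDerivWithinAt y (A (history τ y t) + g) (Set.Ici q) t

lemma IsSectorSolution.norm_sub_sub_integral_le [CompleteSpace E]
    (hy : IsSectorSolution A Cop K q y) (hqt : q ≤ t) :
    ‖y t - y q - ∫ s in q..t, A (history τ y s)‖ ≤
      K * ∫ s in q..t, ‖Cop (history τ y s)‖ := by
  let z : ℝ → E := fun s => y s - ∫ u in q..s, A (history τ y u)
  have hAy : Continuous fun s => A (history τ y s) := by fun_prop
  have hint : ∀ s, HasDerivAt (fun s => ∫ u in q..s, A (history τ y u)) (A (history τ y s)) s :=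
    fun s => (hAy.integral_hasStrictDerivAt q s).hasDerivAt
  have hz : ∀ s ∈ Set.Ioo q t, ∃ g, ‖g‖ ≤ K * ‖Cop (history τ y s)‖ ∧ HasDerivAt z g s := by
    intro s hs
    obtain ⟨g, hg, hder⟩ := hy s hs.1.le
    refine ⟨g, hg, ?_⟩
    simpa only [add_sub_cancel_left] using! (hder.hasDerivAt (Ici_mem_nhds hs.1)).sub (hint s)
  have hz_cont : Continuous z :=
    y.continuous.sub (continuous_iff_continuousAt.2 fun s => (hint s).continuousAt)
  calc ‖y t - y q - ∫ s in q..t, A (history τ y s)‖ = ‖z t - z q‖ := by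
        simp only [z, intervalIntegral.integral_same, sub_zero, sub_right_comm]
    _ ≤ ∫ s in q..t, K * ‖Cop (history τ y s)‖ := by
        refine norm_sub_le_integral_of_norm_deriv_le_of_le hqt hz_cont.continuousOn
          (fun s hs => ?_) (Eventually.of_forall fun s hs => ?_)
          (Continuous.intervalIntegrable (by fun_prop) _ _)
        · obtain ⟨g, -, hder⟩ := hz s hs
          exact hder.differentiableAt.differentiableWithinAt
        · obtain ⟨g, hg, hder⟩ := hz s hs
          rwa [hder.deriv]
    _ = K * ∫ s in q..t, ‖Cop (history τ y s)‖ := intervalIntegral.integral_const_mul _ _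

variable [FiniteDimensional ℝ V]

/-- The exponential rate in the Grönwall estimate for `IsSectorSolution`. -/
def growthRate (A : HistorySpace τ E →L[ℝ] E) (Cop : HistorySpace τ E →L[ℝ] V) (K : ℝ) : ℝ :=
  ‖A‖ + K * coordNorm Cop

lemma growthRate_nonneg (A : HistorySpace τ E →L[ℝ] E) (Cop : HistorySpace τ E →L[ℝ] V)
    (hK : 0 ≤ K) : 0 ≤ growthRate A Cop K :=
  add_nonneg (norm_nonneg A) (mul_nonneg hK (coordNorm_nonneg Cop))

variable [CompleteSpace E]

lemma IsSectorSolution.norm_le_add_integral (hτ : 0 ≤ τ) (hK : 0 ≤ K)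
    (hy : IsSectorSolution A Cop K q y) (hqt : q ≤ t) :
    ‖y t‖ ≤ ‖y q‖ + growthRate A Cop K * ∫ u in (q - τ)..t, ‖y u‖ :=
  calc ‖y t‖ = ‖y q + (∫ s in q..t, A (history τ y s))
          + (y t - y q - ∫ s in q..t, A (history τ y s))‖ := by congr 1; abel
    _ ≤ ‖y q‖ + ‖∫ s in q..t, A (history τ y s)‖
          + ‖y t - y q - ∫ s in q..t, A (history τ y s)‖ := norm_add₃_le
    _ ≤ ‖y q‖ + ‖A‖ * (∫ u in (q - τ)..t, ‖y u‖)
          + K * (coordNorm Cop * ∫ u in (q - τ)..t, ‖y u‖) := by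
        gcongr
        · exact norm_integral_clm_history_le A y hτ hqt
        · refine (hy.norm_sub_sub_integral_le hqt).trans ?_
          gcongr
          exact integral_norm_clm_history_le Cop y hτ hqt
    _ = ‖y q‖ + growthRate A Cop K * ∫ u in (q - τ)..t, ‖y u‖ := by rw [growthRate]; ring

lemma IsSectorSolution.norm_le_mul_exp (hτ : 0 ≤ τ) (hK : 0 ≤ K)
    (hy : IsSectorSolution A Cop K q y) (hqt : q ≤ t) :
    ‖y t‖ ≤ (‖y q‖ + growthRate A Cop K * ∫ u in (q - τ)..q, ‖y u‖)
      * Real.exp (growthRate A Cop K * (t - q)) := by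
  have hy_norm : Continuous fun u => ‖y u‖ := by fun_prop
  refine le_mul_exp_of_le_add_mul_integral hy_norm (growthRate_nonneg A Cop hK)
    (fun s hs => ?_) hqt
  rw [add_assoc, ← mul_add, intervalIntegral.integral_add_adjacent_intervals
    (hy_norm.intervalIntegrable _ _) (hy_norm.intervalIntegrable _ _)]
  exact hy.norm_le_add_integral hτ hK hs

end SectorSolution

section StateEmbedding

open scoped ENNReal

instance isFiniteMeasure_μτ (τ : ℝ) : IsFiniteMeasure (μτ τ) :=
  inferInstanceAs (IsFiniteMeasure (volume.restrict (Set.Ioo (-τ) 0)))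

lemma integral_norm_le_rpow_mul_norm {α G : Type*} [MeasurableSpace α] [NormedAddCommGroup G]
    {μ : Measure α} [IsFiniteMeasure μ] {p : ℝ≥0∞} (hp : 1 ≤ p) (f : Lp G p μ) :
    ∫ x, ‖f x‖ ∂μ ≤ μ.real Set.univ ^ (1 - 1 / p.toReal) * ‖f‖ := by
  have hf : AEStronglyMeasurable f μ := Lp.aestronglyMeasurable f
  have hexp : 0 ≤ 1 - 1 / p.toReal := by
    rcases eq_or_ne p ∞ with rfl | hp_top
    · simp
    · have : 1 ≤ p.toReal := by simpa using ENNReal.toReal_mono hp_top hp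
      simpa using inv_le_one_of_one_le₀ this
  have hfin : μ Set.univ ^ (1 - 1 / p.toReal) ≠ ∞ :=
    ENNReal.rpow_ne_top_of_nonneg hexp (measure_ne_top μ _)
  calc ∫ x, ‖f x‖ ∂μ = (eLpNorm f 1 μ).toReal := by
        rw [integral_norm_eq_lintegral_enorm hf, eLpNorm_one_eq_lintegral_enorm]
    _ ≤ (eLpNorm f p μ * μ Set.univ ^ (1 - 1 / p.toReal)).toReal := by
        refine ENNReal.toReal_mono (ENNReal.mul_ne_top (Lp.eLpNorm_ne_top f) hfin) ?_
        simpa only [ENNReal.toReal_one, div_one] using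
          eLpNorm_le_eLpNorm_mul_rpow_measure_univ hp hf
    _ = μ.real Set.univ ^ (1 - 1 / p.toReal) * ‖f‖ := by
        rw [ENNReal.toReal_mul, ← ENNReal.toReal_rpow, ← Lp.norm_def, mul_comm, measureReal_def]

variable {E V : Type*} [NormedAddCommGroup E] [NormedSpace ℝ E]
  [NormedAddCommGroup V] [NormedSpace ℝ V] {τ K q t : ℝ} {p : ℝ≥0∞}
  {e : HistorySpace τ E →ₗ[ℝ] E × Lp E p (μτ τ)}
  {A : HistorySpace τ E →L[ℝ] E} {Cop : HistorySpace τ E →L[ℝ] V} {y : C(ℝ, E)}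

/-- `e` is the embedding `φ ↦ (φ(0), φ)` of `C([-τ, 0]; E)` into `E × Lᵖ(-τ, 0; E)`. -/
structure IsStateEmbedding (e : HistorySpace τ E →ₗ[ℝ] E × Lp E p (μτ τ)) : Prop where
  fst_eq : ∀ (φ : HistorySpace τ E) (h0 : (0 : ℝ) ∈ Set.Icc (-τ) 0), (e φ).1 = φ ⟨0, h0⟩
  snd_ae_eq : ∀ φ : HistorySpace τ E, ∀ᵐ θ ∂(μτ τ), ∀ hθ : θ ∈ Set.Icc (-τ) (0 : ℝ),
    ((e φ).2 : ℝ → E) θ = φ ⟨θ, hθ⟩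

lemma IsStateEmbedding.norm_apply_le (he : IsStateEmbedding e) (hτ : 0 ≤ τ) (y : C(ℝ, E))
    (q : ℝ) : ‖y q‖ ≤ ‖e (history τ y q)‖ :=
  calc ‖y q‖ = ‖(e (history τ y q)).1‖ := by
        rw [he.fst_eq _ ⟨neg_nonpos.2 hτ, le_rfl⟩, history_apply, add_zero]
    _ ≤ ‖e (history τ y q)‖ := norm_fst_le _

lemma IsStateEmbedding.integral_norm_eq (he : IsStateEmbedding e) (hτ : 0 ≤ τ) (y : C(ℝ, E))
    (q : ℝ) : ∫ u in (q - τ)..q, ‖y u‖ = ∫ θ, ‖(e (history τ y q)).2 θ‖ ∂(μτ τ) :=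
  calc ∫ u in (q - τ)..q, ‖y u‖ = ∫ θ in (-τ)..0, ‖y (q + θ)‖ := by
        rw [intervalIntegral.integral_comp_add_left (fun u => ‖y u‖) q, add_zero,
          ← sub_eq_add_neg]
    _ = ∫ θ, ‖y (q + θ)‖ ∂(μτ τ) := by
        rw [intervalIntegral.integral_of_le (neg_nonpos.2 hτ), integral_Ioc_eq_integral_Ioo, μτ]
    _ = ∫ θ, ‖(e (history τ y q)).2 θ‖ ∂(μτ τ) := by
        refine integral_congr_ae ?_
        have hmem : ∀ᵐ θ ∂(μτ τ), θ ∈ Set.Ioo (-τ) 0 := ae_restrict_mem measurableSet_Ioo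
        filter_upwards [hmem, he.snd_ae_eq (history τ y q)] with θ hθ hsnd
        rw [hsnd (Set.Ioo_subset_Icc_self hθ), history_apply]

variable [Fact (1 ≤ p)]

lemma IsStateEmbedding.integral_norm_le (he : IsStateEmbedding e) (hτ : 0 ≤ τ) (y : C(ℝ, E))
    (q : ℝ) : ∫ u in (q - τ)..q, ‖y u‖ ≤ τ ^ (1 - 1 / p.toReal) * ‖e (history τ y q)‖ := by
  have hμ : (μτ τ).real Set.univ = τ := by simp [μτ, hτ]
  calc ∫ u in (q - τ)..q, ‖y u‖ = ∫ θ, ‖(e (history τ y q)).2 θ‖ ∂(μτ τ) :=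
        he.integral_norm_eq hτ y q
    _ ≤ τ ^ (1 - 1 / p.toReal) * ‖(e (history τ y q)).2‖ := by
        simpa only [hμ] using integral_norm_le_rpow_mul_norm Fact.out (e (history τ y q)).2
    _ ≤ τ ^ (1 - 1 / p.toReal) * ‖e (history τ y q)‖ := by
        gcongr
        exact norm_snd_le _

theorem IsSectorSolution.norm_history_le [CompleteSpace E] [FiniteDimensional ℝ V]
    (hτ : 0 ≤ τ) (hK : 0 ≤ K)
    (hy : IsSectorSolution A Cop K q y) (he : IsStateEmbedding e) (ht : τ ≤ t) :
    ‖history τ y (t + q)‖ ≤ (1 + growthRate A Cop K * τ ^ (1 - 1 / p.toReal))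
      * Real.exp (growthRate A Cop K * t) * ‖e (history τ y q)‖ := by
  have hM : 0 ≤ growthRate A Cop K := growthRate_nonneg A Cop hK
  rw [ContinuousMap.norm_le _ (by positivity)]
  rintro ⟨θ, hθ⟩
  calc ‖y (t + q + θ)‖
      ≤ (‖y q‖ + growthRate A Cop K * ∫ u in (q - τ)..q, ‖y u‖)
          * Real.exp (growthRate A Cop K * (t + q + θ - q)) :=
        hy.norm_le_mul_exp hτ hK (by linarith [hθ.1])
    _ ≤ (‖e (history τ y q)‖
          + growthRate A Cop K * (τ ^ (1 - 1 / p.toReal) * ‖e (history τ y q)‖))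
          * Real.exp (growthRate A Cop K * t) := by
        gcongr
        · exact he.norm_apply_le hτ y q
        · exact he.integral_norm_le hτ y q
        · linarith [hθ.2]
    _ = (1 + growthRate A Cop K * τ ^ (1 - 1 / p.toReal))
          * Real.exp (growthRate A Cop K * t) * ‖e (history τ y q)‖ := by ring

end StateEmbedding

section DelayEquation

open scoped ENNReal

variable {E V Ξ : Type*} [NormedAddCommGroup E] [NormedSpace ℝ E]
  [NormedAddCommGroup V] [NormedSpace ℝ V] [NormedAddCommGroup Ξ] [NormedSpace ℝ Ξ]
  {τ Λ q : ℝ} {A : HistorySpace τ E →L[ℝ] E} {B : Ξ →L[ℝ] E} {Cop : HistorySpace τ E →L[ℝ] V}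
  {F : ℝ → V → Ξ} {W : ℝ → E} {x z : C(ℝ, E)}

/-- `x` solves the delay equation `ẋ(t) = A x_t + B F(t, C x_t) + W(t)` on `[q, ∞)`, with the
one-sided derivative at `q`. -/
def IsSolution (A : HistorySpace τ E →L[ℝ] E) (B : Ξ →L[ℝ] E) (Cop : HistorySpace τ E →L[ℝ] V)
    (F : ℝ → V → Ξ) (W : ℝ → E) (q : ℝ) (x : C(ℝ, E)) : Prop :=
  ∀ t, q ≤ t → HasDerivWithinAt x
    (A (history τ x t) + B (F t (Cop (history τ x t))) + W t) (Set.Ici q) t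

lemma IsSolution.isSectorSolution (hF : ∀ s σ, ‖F s σ‖ ≤ Λ * ‖σ‖)
    (hx : IsSolution A B Cop F 0 q x) : IsSectorSolution A Cop (‖B‖ * Λ) q x := by
  intro t ht
  refine ⟨B (F t (Cop (history τ x t))), ?_, by simpa using hx t ht⟩
  rw [mul_assoc]
  exact B.le_opNorm_of_le (hF t _)

lemma IsSolution.isSectorSolution_sub (hF : ∀ s σ₁ σ₂, ‖F s σ₁ - F s σ₂‖ ≤ Λ * ‖σ₁ - σ₂‖)
    (hx : IsSolution A B Cop F W q x) (hz : IsSolution A B Cop F W q z) :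
    IsSectorSolution A Cop (‖B‖ * Λ) q (x - z) := by
  intro t ht
  refine ⟨B (F t (Cop (history τ x t)) - F t (Cop (history τ z t))), ?_, ?_⟩
  · rw [mul_assoc, history_sub, map_sub Cop]
    exact B.le_opNorm_of_le (hF t _ _)
  · refine ((hx t ht).sub (hz t ht)).congr_deriv ?_
    rw [history_sub, map_sub, map_sub]
    abel

theorem statement18_general [CompleteSpace E] [FiniteDimensional ℝ V] (hτ : 0 ≤ τ)
    {p : ℝ≥0∞} [Fact (1 ≤ p)] (A : HistorySpace τ E →L[ℝ] E) (B : Ξ →L[ℝ] E)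
    (Cop : HistorySpace τ E →L[ℝ] V) (F : ℝ → V → Ξ) (W : ℝ → E) (hΛ : 0 ≤ Λ)
    {e : HistorySpace τ E →ₗ[ℝ] E × Lp E p (μτ τ)} (he : IsStateEmbedding e)
    (Psi : ℝ → ℝ → HistorySpace τ E → HistorySpace τ E)
    (hPsi : ∀ q v₀, ∃ x : C(ℝ, E), history τ x q = v₀ ∧ IsSolution A B Cop F W q x ∧
      ∀ t, 0 ≤ t → Psi t q v₀ = history τ x (t + q)) (T : ℝ) :
    ∃ C > (0 : ℝ), ∀ t, τ ≤ t → t ≤ τ + T → ∀ q,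
      (((∀ s σ, ‖F s σ‖ ≤ Λ * ‖σ‖) ∧ W = 0) → ∀ v₀, ‖Psi t q v₀‖ ≤ C * ‖e v₀‖) ∧
      ((∀ s σ₁ σ₂, ‖F s σ₁ - F s σ₂‖ ≤ Λ * ‖σ₁ - σ₂‖) →
        ∀ v₁ v₂, ‖Psi t q v₁ - Psi t q v₂‖ ≤ C * ‖e v₁ - e v₂‖) := by
  have hK : 0 ≤ ‖B‖ * Λ := by positivity
  let M := growthRate A Cop (‖B‖ * Λ)
  have hM : 0 ≤ M := growthRate_nonneg A Cop hK
  let C := (1 + M * τ ^ (1 - 1 / p.toReal)) * Real.exp (M * (τ + T))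
  have smoothing : ∀ t, τ ≤ t → t ≤ τ + T → ∀ q y, IsSectorSolution A Cop (‖B‖ * Λ) q y →
      ‖history τ y (t + q)‖ ≤ C * ‖e (history τ y q)‖ := fun t ht htT q y hy =>
    (hy.norm_history_le hτ hK he ht).trans (by unfold C; gcongr)
  refine ⟨C, by positivity, fun t ht htT q => ⟨?_, ?_⟩⟩
  · rintro ⟨hF, rfl⟩ v₀
    obtain ⟨x, rfl, hx, hPsi_x⟩ := hPsi q v₀
    rw [hPsi_x t (hτ.trans ht)]
    exact smoothing t ht htT q x (hx.isSectorSolution hF)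
  · intro hF v₁ v₂
    obtain ⟨x, rfl, hx, hPsi_x⟩ := hPsi q v₁
    obtain ⟨z, rfl, hz, hPsi_z⟩ := hPsi q v₂
    rw [hPsi_x t (hτ.trans ht), hPsi_z t (hτ.trans ht), ← map_sub, ← history_sub, ← history_sub]
    exact smoothing t ht htT q (x - z) (hx.isSectorSolution_sub hF hz)

end DelayEquation

/-- Lemma 5.7 of the paper, the smoothing estimate: let `F` satisfy
(L1) (with `W ≡ 0`) or (L2).  Then for every `T > 0` there is `C_T > 0` such that for all
`t ∈ [τ, τ + T]` and `q ∈ ℝ`: in the case of (L1) (`W ≡ 0`),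
`‖ψ^t(q, v₀)‖_𝔼 ≤ C_T |v₀|_ℍ`; in the case of (L2),
`‖ψ^t(q, v₁) - ψ^t(q, v₂)‖_𝔼 ≤ C_T |v₁ - v₂|_ℍ`. -/
theorem statement18 (τ : ℝ) (hτ : 0 < τ) (n m r : ℕ)
    (Atil : EE τ n →L[ℝ] (Fin n → ℝ))
    (Cop : EE τ n →L[ℝ] (Fin r → ℝ))
    (Btil : Matrix (Fin n) (Fin m) ℝ)
    (Wf : ℝ → (Fin n → ℝ)) (hWcont : Continuous Wf) (hWbdd : ∃ c, ∀ t, ‖Wf t‖ ≤ c)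
    (F : ℝ → (Fin r → ℝ) → (Fin m → ℝ))
    (hFcont : Continuous fun p : ℝ × (Fin r → ℝ) => F p.1 p.2)
    (Λ : ℝ) (hΛ : 0 < Λ)
    (hcase : ((∀ (t : ℝ) (σ : Fin r → ℝ), ‖F t σ‖ ≤ Λ * ‖σ‖) ∧ Wf = 0) ∨
      (∀ (t : ℝ) (σ₁ σ₂ : Fin r → ℝ), ‖F t σ₁ - F t σ₂‖ ≤ Λ * ‖σ₁ - σ₂‖))
    (e : EE τ n →L[ℝ] HSp τ n) (he_inj : Function.Injective e)
    (he1 : ∀ φ : EE τ n, (e φ).1 = φ ⟨0, Set.right_mem_Icc.mpr (by linarith)⟩)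
    (he2 : ∀ φ : EE τ n, ∀ᵐ θ ∂(μτ τ), ∀ hθ : θ ∈ Set.Icc (-τ) (0:ℝ),
      ((e φ).2 : ℝ → (Fin n → ℝ)) θ = φ ⟨θ, hθ⟩)
    (Psi : ℝ → ℝ → EE τ n → EE τ n)
    (hPsi : ∀ (q : ℝ) (v₀ : EE τ n), ∃ (x : ℝ → (Fin n → ℝ)) (hx : Continuous x),
      seg τ x hx q = v₀ ∧
      (∀ t : ℝ, q ≤ t → HasDerivWithinAt x
        (Atil (seg τ x hx t) + Btil.mulVec (F t (Cop (seg τ x hx t))) + Wf t)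
        (Set.Ici q) t) ∧
      ∀ t : ℝ, 0 ≤ t → Psi t q v₀ = seg τ x hx (t + q)) :
    ∀ T > (0:ℝ), ∃ C > (0:ℝ), ∀ t : ℝ, τ ≤ t → t ≤ τ + T → ∀ q : ℝ,
      (((∀ (s : ℝ) (σ : Fin r → ℝ), ‖F s σ‖ ≤ Λ * ‖σ‖) ∧ Wf = 0) →
        ∀ v₀ : EE τ n, ‖Psi t q v₀‖ ≤ C * ‖e v₀‖) ∧
      ((∀ (s : ℝ) (σ₁ σ₂ : Fin r → ℝ), ‖F s σ₁ - F s σ₂‖ ≤ Λ * ‖σ₁ - σ₂‖) →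
        ∀ v₁ v₂ : EE τ n, ‖Psi t q v₁ - Psi t q v₂‖ ≤ C * ‖e v₁ - e v₂‖) :=
  fun T _ => statement18_general hτ.le Atil (LinearMap.toContinuousLinearMap Btil.mulVecLin) Cop F
    Wf hΛ.le (e := (e : EE τ n →ₗ[ℝ] HSp τ n)) ⟨fun φ _ => he1 φ, he2⟩ Psi (fun q v₀ =>
      let ⟨x, hx, h0, hder, hPsi_x⟩ := hPsi q v₀; ⟨⟨x, hx⟩, h0, hder, hPsi_x⟩) T

end DelaySmoothing
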